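/- Suppose μ₀ = μ₁. Then a nonzero α ∈ ℝ^p minimizes E over nonzero vectors if and only if it maximizes the function α ↦ max{(αᵀΣ₁α)/(αᵀΣ₀α), (αᵀΣ₀α)/(αᵀΣ₁α)} over nonzero vectors. Moreover, if among all eigenvalues of the matrices Σ₀⁻¹Σ₁ and Σ₁⁻¹Σ₀ there is a unique greatest eigenvalue λ, then any eigenvector corresponding to λ is a minimizer of E. -/

import Mathlib

open MeasureTheory ProbabilityTheory Matrix Filter Set

noncomputable def Phi (t : ℝ) : ℝ := ((gaussianReal 0 1) (Set.Iic t)).toReal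
noncomputable def calE (r g : ℝ) : ℝ :=
  if g = 1 then Phi (-(|r| / 2))
  else
    1/2
      + (1/2) * Phi ((r - g * Real.sqrt (r^2 + (g^2 - 1) * Real.log (g^2))) / (g^2 - 1))
      - (1/2) * Phi ((r + g * Real.sqrt (r^2 + (g^2 - 1) * Real.log (g^2))) / (g^2 - 1))
      + (1/2) * Phi ((r * g + Real.sqrt (r^2 + (g^2 - 1) * Real.log (g^2))) / (g^2 - 1))
      - (1/2) * Phi ((r * g - Real.sqrt (r^2 + (g^2 - 1) * Real.log (g^2))) / (g^2 - 1))
noncomputable def Evec {p : ℕ} (μ0 μ1 : Fin p → ℝ) (S0 S1 : Matrix (Fin p) (Fin p) ℝ)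
    (α : Fin p → ℝ) : ℝ :=
  calE ((dotProduct α μ0 - dotProduct α μ1) / Real.sqrt (dotProduct α (S1.mulVec α)))
    (Real.sqrt (dotProduct α (S0.mulVec α)) / Real.sqrt (dotProduct α (S1.mulVec α)))


lemma phi_int (t : ℝ) : Phi t = ∫ x in Iic t, gaussianPDFReal 0 1 x := by
  unfold Phi
  rw [gaussianReal_apply_eq_integral 0 one_ne_zero, ENNReal.toReal_ofReal]
  exact integral_nonneg fun x => gaussianPDFReal_nonneg _ _ _

lemma pdf_cont : Continuous (gaussianPDFReal 0 1) := by
  rw [gaussianPDFReal_def]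
  fun_prop

lemma phi_deriv (t : ℝ) : HasDerivAt Phi (gaussianPDFReal 0 1 t) t := by
  have h : Phi = fun t => Phi 0 + ∫ x in (0:ℝ)..t, gaussianPDFReal 0 1 x := by
    funext t
    rw [phi_int, phi_int, ← intervalIntegral.integral_Iic_sub_Iic
      (integrable_gaussianPDFReal 0 1).integrableOn (integrable_gaussianPDFReal 0 1).integrableOn]
    ring
  rw [h]
  exact (intervalIntegral.integral_hasDerivAt_right (pdf_cont.intervalIntegrable _ _)
    pdf_cont.stronglyMeasurable.stronglyMeasurableAtFilter pdf_cont.continuousAt).const_add _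

lemma phi_strictMono : StrictMono Phi :=
  strictMono_of_deriv_pos fun x => by
    rw [(phi_deriv x).deriv]; exact gaussianPDFReal_pos _ _ _ one_ne_zero

lemma phi_neg (t : ℝ) : Phi (-t) = 1 - Phi t := by
  haveI : NullSingletonClass (gaussianReal 0 1) := nullSingletonClass_gaussianReal one_ne_zero
  have h1 : (gaussianReal 0 1) (Iic (-t)) = (gaussianReal 0 1) (Ioi t) := by
    have h := gaussianReal_map_neg (μ := 0) (v := 1)
    rw [neg_zero] at h
    conv_lhs => rw [← h]
    rw [Measure.map_apply measurable_neg measurableSet_Iic]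
    have : (fun x : ℝ => -x) ⁻¹' Iic (-t) = Ici t := by ext x; simp
    rw [this]
    exact (measure_congr Ioi_ae_eq_Ici).symm
  have h2 : (gaussianReal 0 1).real (Iic t)ᶜ = 1 - (gaussianReal 0 1).real (Iic t) :=
    probReal_compl_eq_one_sub measurableSet_Iic
  rw [compl_Iic] at h2
  unfold Phi
  rw [h1]
  exact h2

lemma phi_zero : Phi 0 = 1/2 := by
  have := phi_neg 0
  rw [neg_zero] at this
  linarith

/-- the optimal threshold -/
noncomputable def aa (g : ℝ) : ℝ := Real.sqrt (Real.log (g^2) / (g^2 - 1))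

lemma calE_zero {g : ℝ} (hg : g ≠ 1) : calE 0 g = 1/2
    + Phi (Real.sqrt ((g^2 - 1) * Real.log (g^2)) / (g^2 - 1))
    - Phi (g * Real.sqrt ((g^2 - 1) * Real.log (g^2)) / (g^2 - 1)) := by
  unfold calE
  rw [if_neg hg]
  simp only [zero_mul, zero_add, zero_sub, ne_eq, OfNat.ofNat_ne_zero, not_false_eq_true, zero_pow,
    neg_div, phi_neg]
  ring

lemma calE_gt {g : ℝ} (hg : 1 < g) : calE 0 g = 1/2 - (Phi (g * aa g) - Phi (aa g)) := by
  have hc : 0 < g^2 - 1 := by nlinarith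
  have h : Real.sqrt ((g^2 - 1) * Real.log (g^2)) / (g^2 - 1) = aa g := by
    have : (g^2 - 1) * Real.log (g^2) = (g^2-1)^2 * (Real.log (g^2) / (g^2 - 1)) := by
      field_simp
    rw [this, Real.sqrt_mul (by positivity), Real.sqrt_sq hc.le]
    unfold aa
    field_simp
  rw [calE_zero hg.ne', mul_div_assoc, h]
  ring

lemma calE_inv {g : ℝ} (hg : 0 < g) : calE 0 g⁻¹ = calE 0 g := by
  by_cases h1 : g = 1
  · simp [h1]
  have hc : g^2 - 1 ≠ 0 := by
    intro h
    have : (g - 1) * (g + 1) = 0 := by linarith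
    rcases mul_eq_zero.1 this with h | h
    · exact h1 (by linarith)
    · linarith
  rw [calE_zero h1, calE_zero (by simpa using h1)]
  have hs : Real.sqrt (((g⁻¹)^2 - 1) * Real.log ((g⁻¹)^2))
      = Real.sqrt ((g^2 - 1) * Real.log (g^2)) / g := by
    have : ((g⁻¹)^2 - 1) * Real.log ((g⁻¹)^2) = ((g^2 - 1) * Real.log (g^2)) / g^2 := by
      rw [inv_pow, Real.log_inv]
      field_simp
      ring
    rw [this, Real.sqrt_div' _ (by positivity), Real.sqrt_sq hg.le]
  have hc' : (g⁻¹)^2 - 1 = - ((g^2 - 1) / g^2) := by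
    field_simp
    ring
  rw [hs, hc']
  set s := Real.sqrt ((g^2 - 1) * Real.log (g^2))
  have e1 : s / g / -((g^2 - 1) / g^2) = -(g * s / (g^2 - 1)) := by
    field_simp
  have e2 : g⁻¹ * (s / g) / -((g^2 - 1) / g^2) = -(s / (g^2 - 1)) := by
    field_simp
  rw [e1, e2, phi_neg, phi_neg]
  ring

lemma aa_sq {g : ℝ} (hg : 1 < g) : (aa g)^2 * (g^2 - 1) = Real.log (g^2) := by
  have hc : 0 < g^2 - 1 := by nlinarith
  have hl : 0 ≤ Real.log (g^2) := Real.log_nonneg (by linarith)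
  unfold aa
  rw [Real.sq_sqrt (by positivity)]
  field_simp

lemma aa_pos {g : ℝ} (hg : 1 < g) : 0 < aa g := by
  have hc : 0 < g^2 - 1 := by nlinarith
  have hl : 0 < Real.log (g^2) := Real.log_pos (by linarith)
  unfold aa
  positivity

lemma pdf_mul {g : ℝ} (hg : 1 < g) (x : ℝ) : g * gaussianPDFReal 0 1 (g * x)
    = gaussianPDFReal 0 1 x * Real.exp ((Real.log (g^2) - x^2 * (g^2 - 1)) / 2) := by
  have h : g = Real.exp (Real.log (g^2) / 2) := by
    rw [Real.log_pow]
    push_cast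
    rw [mul_div_cancel_left₀ _ two_ne_zero, Real.exp_log (by linarith)]
  have : g * gaussianPDFReal 0 1 (g * x) = Real.exp (Real.log (g^2) / 2) * gaussianPDFReal 0 1 (g * x) := by
    rw [← h]
  rw [this]
  simp only [gaussianPDFReal]
  rw [mul_left_comm, ← Real.exp_add, mul_assoc _ (Real.exp _), ← Real.exp_add]
  congr 2
  push_cast
  ring

lemma h_deriv (g x : ℝ) : HasDerivAt (fun x => Phi (g * x) - Phi x)
    (g * gaussianPDFReal 0 1 (g * x) - gaussianPDFReal 0 1 x) x := by
  have h1 : HasDerivAt (fun x => Phi (g * x)) (gaussianPDFReal 0 1 (g * x) * (g * 1)) x :=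
    (phi_deriv (g * x)).comp x ((hasDerivAt_id x).const_mul g)
  have := h1.sub (phi_deriv x)
  rw [mul_one, mul_comm] at this
  exact this

lemma h_max {g x : ℝ} (hg : 1 < g) (hx : 0 ≤ x) :
    Phi (g * x) - Phi x ≤ Phi (g * aa g) - Phi (aa g) := by
  have hc : 0 < g^2 - 1 := by nlinarith
  have hd : Differentiable ℝ (fun x => Phi (g * x) - Phi x) :=
    fun x => (h_deriv g x).differentiableAt
  have ha := aa_pos hg
  have hsq := aa_sq hg
  rcases le_total x (aa g) with h | h
  · refine monotoneOn_of_deriv_nonneg (convex_Icc 0 (aa g)) hd.continuous.continuousOn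
      hd.differentiableOn ?_ ⟨hx, h⟩ ⟨ha.le, le_rfl⟩ h
    intro y hy
    rw [interior_Icc] at hy
    rw [(h_deriv g y).deriv, pdf_mul hg, sub_nonneg]
    refine le_mul_of_one_le_right (gaussianPDFReal_nonneg _ _ _) (Real.one_le_exp ?_)
    have : y^2 ≤ (aa g)^2 := by nlinarith [hy.1, hy.2]
    nlinarith
  · refine antitoneOn_of_deriv_nonpos (convex_Ici (aa g)) hd.continuous.continuousOn
      hd.differentiableOn ?_ self_mem_Ici h h
    intro y hy
    rw [interior_Ici] at hy
    have hy : aa g < y := hy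
    rw [(h_deriv g y).deriv, pdf_mul hg, sub_nonpos]
    refine mul_le_of_le_one_right (gaussianPDFReal_nonneg _ _ _) (Real.exp_le_one_iff.2 ?_)
    have : (aa g)^2 ≤ y^2 := by nlinarith
    nlinarith

lemma calE_anti : StrictAntiOn (calE 0) (Ici 1) := by
  intro g hg k hk hgk
  have hg : 1 ≤ g := hg
  have hk1 : 1 < k := lt_of_le_of_lt hg hgk
  rw [calE_gt hk1]
  rcases hg.eq_or_lt with h | h
  · subst h
    have : calE 0 1 = 1/2 := by simp [calE, phi_zero]
    rw [this]
    have := phi_strictMono (show aa k < k * aa k by nlinarith [aa_pos hk1])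
    linarith
  · rw [calE_gt h]
    have h1 := h_max hk1 (aa_pos h).le
    have := phi_strictMono (show g * aa g < k * aa g by nlinarith [aa_pos h])
    linarith

lemma max_ge_one {q : ℝ} (hq : 0 < q) : 1 ≤ max q⁻¹ q := by
  rcases le_total q 1 with h | h
  · exact le_max_of_le_left ((one_le_inv₀ hq).2 h)
  · exact le_max_of_le_right h

lemma calE_max {q : ℝ} (hq : 0 < q) : calE 0 (Real.sqrt q) = calE 0 (Real.sqrt (max q⁻¹ q)) := by
  rcases le_total q⁻¹ q with h | h
  · rw [max_eq_right h]
  · rw [max_eq_left h, Real.sqrt_inv, calE_inv (Real.sqrt_pos.2 hq)]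

lemma calE_le_iff {q r : ℝ} (hq : 0 < q) (hr : 0 < r) :
    calE 0 (Real.sqrt q) ≤ calE 0 (Real.sqrt r) ↔ max r⁻¹ r ≤ max q⁻¹ q := by
  rw [calE_max hq, calE_max hr, calE_anti.le_iff_ge, Real.sqrt_le_sqrt_iff]
  · linarith [max_ge_one hq]
  · exact Real.one_le_sqrt.2 (max_ge_one hq)
  · exact Real.one_le_sqrt.2 (max_ge_one hr)

lemma qpos {p : ℕ} {S : Matrix (Fin p) (Fin p) ℝ} (h : S.PosDef) {a : Fin p → ℝ} (ha : a ≠ 0) :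
    0 < dotProduct a (S.mulVec a) := by
  simpa using h.dotProduct_mulVec_pos ha

lemma Evec_le_iff {p : ℕ} (μ : Fin p → ℝ)
    {S0 S1 : Matrix (Fin p) (Fin p) ℝ} (h0 : S0.PosDef) (h1 : S1.PosDef)
    {a b : Fin p → ℝ} (ha : a ≠ 0) (hb : b ≠ 0) :
    Evec μ μ S0 S1 a ≤ Evec μ μ S0 S1 b ↔
      max (dotProduct b (S1.mulVec b) / dotProduct b (S0.mulVec b))
                (dotProduct b (S0.mulVec b) / dotProduct b (S1.mulVec b)) ≤
            max (dotProduct a (S1.mulVec a) / dotProduct a (S0.mulVec a))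
                (dotProduct a (S0.mulVec a) / dotProduct a (S1.mulVec a)) := by
  have a0 := qpos h0 ha
  have a1 := qpos h1 ha
  have b0 := qpos h0 hb
  have b1 := qpos h1 hb
  unfold Evec
  rw [sub_self, sub_self, zero_div, zero_div, ← Real.sqrt_div a0.le, ← Real.sqrt_div b0.le,
    calE_le_iff (by positivity) (by positivity), inv_div, inv_div]

lemma exists_top {p : ℕ} (hp : 1 ≤ p)
    {S0 S1 : Matrix (Fin p) (Fin p) ℝ} (h0 : S0.PosDef) (h1 : S1.PosDef) :
    ∃ L : ℝ, (∃ u : Fin p → ℝ, u ≠ 0 ∧ (S0⁻¹ * S1).mulVec u = L • u) ∧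
      ∀ b : Fin p → ℝ, b ≠ 0 → dotProduct b (S1.mulVec b) / dotProduct b (S0.mulVec b) ≤ L := by
  haveI : Nonempty (Fin p) := ⟨⟨0, hp⟩⟩
  have hne : ∀ x ∈ Metric.sphere (0 : Fin p → ℝ) 1, x ≠ 0 := by
    intro x hx h
    simp [h] at hx
  obtain ⟨u, hu, hmax⟩ := (isCompact_sphere (0 : Fin p → ℝ) 1).exists_isMaxOn
    (NormedSpace.sphere_nonempty.2 zero_le_one)
    (f := fun b => dotProduct b (S1.mulVec b) / dotProduct b (S0.mulVec b))
    (ContinuousOn.div (by fun_prop) (by fun_prop) fun x hx => (qpos h0 (hne x hx)).ne')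
  have hu0 := hne u hu
  have hle : ∀ b : Fin p → ℝ, b ≠ 0 → dotProduct b (S1.mulVec b) / dotProduct b (S0.mulVec b) ≤
      dotProduct u (S1.mulVec u) / dotProduct u (S0.mulVec u) := by
    intro b hb
    have hn : ‖b‖ ≠ 0 := norm_ne_zero_iff.2 hb
    have hs : ‖b‖⁻¹ • b ∈ Metric.sphere (0 : Fin p → ℝ) 1 := by
      simp [norm_smul, hn]
    have := hmax hs
    simp only [mem_setOf_eq, mulVec_smul, smul_dotProduct, dotProduct_smul, smul_eq_mul] at this
    rwa [mul_div_mul_left _ _ (inv_ne_zero hn), mul_div_mul_left _ _ (inv_ne_zero hn)] at this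
  refine ⟨_, ⟨u, hu0, ?_⟩, hle⟩
  set L := dotProduct u (S1.mulVec u) / dotProduct u (S0.mulVec u) with hL
  have hexp : ∀ b : Fin p → ℝ, dotProduct b ((L • S0 - S1).mulVec b) =
      L * dotProduct b (S0.mulVec b) - dotProduct b (S1.mulVec b) := by
    intro b
    simp [sub_mulVec, smul_mulVec, dotProduct_sub]
  have hM : (L • S0 - S1).PosSemidef := by
    refine .of_dotProduct_mulVec_nonneg ?_ ?_
    · exact (h0.1.smul (IsSelfAdjoint.all L)).sub h1.1
    · intro b
      rw [star_trivial, hexp]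
      by_cases hb : b = 0
      · simp [hb]
      · have := hle b hb
        rw [div_le_iff₀ (qpos h0 hb)] at this
        linarith
  have hz : (L • S0 - S1).mulVec u = 0 := by
    rw [← hM.dotProduct_mulVec_zero_iff, star_trivial, hexp, hL,
      div_mul_cancel₀ _ (qpos h0 hu0).ne', sub_self]
  have hz' : S1.mulVec u = L • S0.mulVec u := by
    rw [sub_mulVec, smul_mulVec, sub_eq_zero] at hz
    exact hz.symm
  rw [← mulVec_mulVec, hz', mulVec_smul, mulVec_mulVec,
    nonsing_inv_mul _ ((isUnit_iff_isUnit_det _).1 h0.isUnit), one_mulVec]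

lemma eig_ratio {p : ℕ}
    {S0 S1 : Matrix (Fin p) (Fin p) ℝ} (h0 : S0.PosDef)
    {v : Fin p → ℝ} (hv : v ≠ 0) {L : ℝ} (h : (S0⁻¹ * S1).mulVec v = L • v) :
    dotProduct v (S1.mulVec v) / dotProduct v (S0.mulVec v) = L := by
  have h2 := congrArg (S0.mulVec) h
  rw [mulVec_mulVec, ← mul_assoc, mul_nonsing_inv _ ((isUnit_iff_isUnit_det _).1 h0.isUnit),
    one_mul, mulVec_smul] at h2
  rw [h2, dotProduct_smul, smul_eq_mul, mul_div_cancel_right₀ _ (qpos h0 hv).ne']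

/-- Equal-means case: minimizers of E are exactly the maximizers of the variance-ratio
criterion; and if there is a unique greatest eigenvalue among those of Σ₀⁻¹Σ₁ and
Σ₁⁻¹Σ₀, then any corresponding eigenvector is a minimizer of E. -/
theorem Evec_equal_mean {p : ℕ} (hp : 1 ≤ p) (μ0 μ1 : Fin p → ℝ)
    (S0 S1 : Matrix (Fin p) (Fin p) ℝ) (h0 : S0.PosDef) (h1 : S1.PosDef)
    (hμ : μ0 = μ1) :
    (∀ α : Fin p → ℝ, α ≠ 0 →
        ((∀ γ : Fin p → ℝ, γ ≠ 0 → Evec μ0 μ1 S0 S1 α ≤ Evec μ0 μ1 S0 S1 γ) ↔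
          (∀ γ : Fin p → ℝ, γ ≠ 0 →
            max (dotProduct γ (S1.mulVec γ) / dotProduct γ (S0.mulVec γ))
                (dotProduct γ (S0.mulVec γ) / dotProduct γ (S1.mulVec γ)) ≤
            max (dotProduct α (S1.mulVec α) / dotProduct α (S0.mulVec α))
                (dotProduct α (S0.mulVec α) / dotProduct α (S1.mulVec α))))) ∧
    ∀ lam : ℝ,
      (∃ v : Fin p → ℝ, v ≠ 0 ∧
          ((S0⁻¹ * S1).mulVec v = lam • v ∨ (S1⁻¹ * S0).mulVec v = lam • v)) →
      (∀ ν : ℝ, (∃ v : Fin p → ℝ, v ≠ 0 ∧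
          ((S0⁻¹ * S1).mulVec v = ν • v ∨ (S1⁻¹ * S0).mulVec v = ν • v)) →
        ν ≠ lam → ν < lam) →
      ∀ v : Fin p → ℝ, v ≠ 0 →
        ((S0⁻¹ * S1).mulVec v = lam • v ∨ (S1⁻¹ * S0).mulVec v = lam • v) →
        ∀ γ : Fin p → ℝ, γ ≠ 0 → Evec μ0 μ1 S0 S1 v ≤ Evec μ0 μ1 S0 S1 γ := by
  subst hμ
  refine ⟨fun α hα => forall₂_congr fun γ hγ => Evec_le_iff μ0 h0 h1 hα hγ, ?_⟩
  intro lam _ hgreat v hv hev γ hγ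
  have hle : ∀ ν : ℝ, (∃ v : Fin p → ℝ, v ≠ 0 ∧
      ((S0⁻¹ * S1).mulVec v = ν • v ∨ (S1⁻¹ * S0).mulVec v = ν • v)) → ν ≤ lam := by
    intro ν hν
    by_cases h : ν = lam
    · exact h.le
    · exact (hgreat ν hν h).le
  rw [Evec_le_iff μ0 h0 h1 hv hγ]
  obtain ⟨L, ⟨u, hu, hLu⟩, hL⟩ := exists_top hp h0 h1
  obtain ⟨L', ⟨u', hu', hLu'⟩, hL'⟩ := exists_top hp h1 h0
  refine le_trans (max_le ((hL γ hγ).trans (hle L ⟨u, hu, Or.inl hLu⟩))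
    ((hL' γ hγ).trans (hle L' ⟨u', hu', Or.inr hLu'⟩))) ?_
  rcases hev with h | h
  · exact le_max_of_le_left (eig_ratio h0 hv h).ge
  · exact le_max_of_le_right (eig_ratio h1 hv h).ge
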